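/- arXiv:1207.5240 — 3 statements merged into one kernel-verified Lean document; each statement's English description precedes it below -/
import Mathlib

section
/- Every word w of length k+1 over Z/mZ admits at least one 'successful partition': a way of splitting w into m consecutive (possibly empty) blocks, cyclically labeled so that the block labels increase by 1 from left to right starting with label σ+1 where σ is the sum of w mod m, such that the recovery algorithm (start at block 0; repeatedly remove the leftmost remaining letter v of the current block t and move to block t+v) removes all k+1 letters without ever reading from an empty block. -/
/-- The recovery algorithm: starting at block `t`, repeatedly remove the leftmost
letter `v` of the current block, output `t + v`, and move to block `t + v`.
It returns `none` if it ever attempts to read from an empty block; otherwise it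
returns the list of outputs together with the final state of the blocks. -/
def recover (m : ℕ) : ℕ → ZMod m → (ZMod m → List (ZMod m)) →
    Option (List (ZMod m) × (ZMod m → List (ZMod m)))
  | 0, _, B => some ([], B)
  | n + 1, t, B =>
    match B t with
    | [] => none
    | v :: rest =>
      (recover m n (t + v) (Function.update B t rest)).map
        (fun r => ((t + v) :: r.1, r.2))

/-- Concatenation of the blocks of `B` in cyclic label order starting at label `s`. -/
def concatFrom (m : ℕ) (s : ZMod m) (B : ZMod m → List (ZMod m)) : List (ZMod m) :=
  (List.range m).flatMap (fun j => B (s + (j : ℕ)))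

/-- The blocks along which the walk starting at `t` with steps `u` is recovered: block `x`
lists, in order, the steps taken from `x`. -/
def walkBlocks (m : ℕ) : ZMod m → List (ZMod m) → ZMod m → List (ZMod m)
  | _, [], _ => []
  | t, v :: u, x => if x = t then v :: walkBlocks m (t + v) u x else walkBlocks m (t + v) u x

theorem recover_walkBlocks (m : ℕ) (u : List (ZMod m)) (t : ZMod m) :
    ∃ out, recover m u.length t (walkBlocks m t u) = some (out, fun _ => []) := by
  induction u generalizing t with
  | nil => exact ⟨[], rfl⟩
  | cons v u ih =>
    obtain ⟨out, h⟩ := ih (t + v)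
    refine ⟨(t + v) :: out, ?_⟩
    have hB : walkBlocks m t (v :: u) t = v :: walkBlocks m (t + v) u t := by simp [walkBlocks]
    have hU : Function.update (walkBlocks m t (v :: u)) t (walkBlocks m (t + v) u t) =
        walkBlocks m (t + v) u := by
      funext x
      by_cases hx : x = t
      · subst hx; simp
      · simp [hx, walkBlocks]
    simp only [List.length_cons, recover, hB, hU, h, Option.map_some]

theorem walkBlocks_injective (m : ℕ) (u u' : List (ZMod m)) (hl : u.length = u'.length)
    (t : ZMod m) (h : walkBlocks m t u = walkBlocks m t u') : u = u' := by
  induction u generalizing t u' with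
  | nil => exact (List.length_eq_zero_iff.mp hl.symm).symm
  | cons v u ih =>
    cases u' with
    | nil => simp at hl
    | cons v' u' =>
      have ht := congrFun h t
      simp only [walkBlocks, if_true, List.cons.injEq] at ht
      obtain ⟨rfl, ht⟩ := ht
      congr 1
      refine ih u' (by simpa using hl) (t + v) ?_
      funext x
      by_cases hx : x = t
      · subst hx; exact ht
      · simpa [walkBlocks, hx] using congrFun h x

theorem sum_count_walkBlocks (m : ℕ) [NeZero m] (u : List (ZMod m)) (t z : ZMod m) :
    ∑ x, (walkBlocks m t u x).count z = u.count z := by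
  induction u generalizing t with
  | nil => simp [walkBlocks]
  | cons v u ih =>
    have h : ∀ x, (walkBlocks m t (v :: u) x).count z =
        (walkBlocks m (t + v) u x).count z + if x = t then (if v = z then 1 else 0) else 0 := by
      intro x
      by_cases hx : x = t <;> simp [walkBlocks, hx, List.count_cons]
    simp only [h, Finset.sum_add_distrib, ih, Finset.sum_ite_eq', Finset.mem_univ, if_true,
      List.count_cons, beq_iff_eq]

/-- Departures and arrivals of the walk balance at every vertex, up to its two endpoints. -/
theorem length_walkBlocks_add (m : ℕ) [NeZero m] (u : List (ZMod m)) (t x : ZMod m) :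
    (walkBlocks m t u x).length + (if x = t + u.sum then 1 else 0) =
      ∑ y, (walkBlocks m t u y).count (x - y) + if x = t then 1 else 0 := by
  induction u generalizing t with
  | nil => simp [walkBlocks]
  | cons v u ih =>
    have h : ∀ y, (walkBlocks m t (v :: u) y).count (x - y) =
        (walkBlocks m (t + v) u y).count (x - y) +
          if y = t then (if x = t + v then 1 else 0) else 0 := by
      intro y
      by_cases hy : y = t
      · have : v = x - t ↔ x = t + v := by
          rw [eq_sub_iff_add_eq, add_comm, eq_comm]
        simp [walkBlocks, hy, List.count_cons, this]
      · simp [walkBlocks, hy]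
    have hlen : (walkBlocks m t (v :: u) x).length =
        (walkBlocks m (t + v) u x).length + if x = t then 1 else 0 := by
      by_cases hx : x = t <;> simp [walkBlocks, hx]
    simp only [h, hlen, Finset.sum_add_distrib, Finset.sum_ite_eq', Finset.mem_univ, if_true,
      List.sum_cons, ← add_assoc]
    rw [← ih (t + v)]
    ring

/-- A set of vertices closed under last exits, once visited, contains the end of the walk. -/
theorem end_mem_of_last_exit_mem (m : ℕ) (J : Set (ZMod m)) (u : List (ZMod m)) (t : ZMod m)
    (hJ : ∀ x ∈ J, ∀ v ∈ (walkBlocks m t u x).getLast?, x + v ∈ J)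
    (h : t ∈ J ∨ ∃ x ∈ J, walkBlocks m t u x ≠ []) : t + u.sum ∈ J := by
  induction u generalizing t with
  | nil => simpa [walkBlocks] using h
  | cons v u ih =>
    rw [List.sum_cons, ← add_assoc]
    apply ih
    · intro x hx z hz
      apply hJ x hx z
      by_cases hxt : x = t
      · simp only [walkBlocks, hxt, if_true] at hz ⊢
        rw [List.getLast?_cons]
        rw [Option.mem_def] at hz
        simp [hz]
      · simpa [walkBlocks, hxt] using hz
    · by_cases ht : t ∈ J
      · by_cases hr : walkBlocks m (t + v) u t = []
        · exact Or.inl (hJ t ht v (by simp [walkBlocks, hr]))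
        · exact Or.inr ⟨t, ht, hr⟩
      · obtain ⟨x, hx, hne⟩ := h.resolve_left ht
        have hxt : x ≠ t := fun e => ht (e ▸ hx)
        exact Or.inr ⟨x, hx, by simpa [walkBlocks, hxt] using hne⟩

/-- If translating each row `x a` by `w a` changes the column sums of a sign-coherent array
only by a constant, then positive entries are translated into columns of positive sum. -/
theorem sum_pos_of_translate {ι : Type*} [Fintype ι] {m : ℕ} [NeZero m] (w : ι → ZMod m)
    (x : ι → ZMod m → ℤ) (hsign : ∀ l, (∀ a, 0 ≤ x a l) ∨ ∀ a, x a l ≤ 0)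
    (h : ∀ l, ∑ a, x a (l - w a) - ∑ a, x a l =
      ∑ a, x a (l - 1 - w a) - ∑ a, x a (l - 1))
    (a : ι) (l : ZMod m) (hpos : 0 < x a l) : 0 < ∑ b, x b (l + w a) := by
  set f : ZMod m → ℤ := fun l => ∑ a, x a (l - w a) - ∑ a, x a l with hf
  have hconst : ∀ l, f l = f 0 := by
    have hnat : ∀ j : ℕ, f (j : ZMod m) = f 0 := by
      intro j
      induction j with
      | zero => simp
      | succ j ih =>
        rw [← ih]
        simpa [hf] using h ((j + 1 : ℕ) : ZMod m)
    intro l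
    simpa using hnat l.val
  have htrans : ∀ g : ι → ZMod m → ℤ,
      ∑ l, ∑ a, g a (l - w a) = ∑ l, ∑ a, g a l := by
    intro g
    rw [Finset.sum_comm, Finset.sum_comm (f := fun l a => g a l)]
    exact Finset.sum_congr rfl fun a _ => (Equiv.subRight (w a)).sum_comp (g a)
  have hf0 : f 0 = 0 := by
    have h1 : ∑ l, f l = 0 := by
      simp only [hf, Finset.sum_sub_distrib]
      rw [htrans x, sub_self]
    simp only [hconst, Finset.sum_const, Finset.card_univ, ZMod.card, nsmul_eq_mul] at h1
    exact (mul_eq_zero.mp h1).resolve_left (by exact_mod_cast NeZero.ne m)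
  have hcol : ∀ l, ∑ a, x a (l - w a) = ∑ a, x a l := fun l =>
    sub_eq_zero.mp ((hconst l).trans hf0)
  have hmax : ∀ l, ∑ a, max (x a l) 0 = max (∑ a, x a l) 0 := by
    intro l
    rcases hsign l with hs | hs
    · rw [max_eq_left (Finset.sum_nonneg fun a _ => hs a)]
      exact Finset.sum_congr rfl fun a _ => max_eq_left (hs a)
    · rw [max_eq_right (Finset.sum_nonpos fun a _ => hs a)]
      exact Finset.sum_eq_zero fun a _ => max_eq_right (hs a)
  have hle : ∀ l ∈ Finset.univ, max (∑ a, x a l) 0 ≤ ∑ a, max (x a (l - w a)) 0 := by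
    intro l _
    rw [← hcol l]
    exact max_le (Finset.sum_le_sum fun a _ => le_max_left _ _)
      (Finset.sum_nonneg fun a _ => le_max_right _ _)
  have hsum : ∑ l, max (∑ a, x a l) 0 = ∑ l, ∑ a, max (x a (l - w a)) 0 := by
    rw [htrans fun a l => max (x a l) 0]
    exact Finset.sum_congr rfl fun l _ => (hmax l).symm
  have heq := (Finset.sum_eq_sum_iff_of_le hle).mp hsum (l + w a) (Finset.mem_univ _)
  have hone : max (x a (l + w a - w a)) 0 ≤ ∑ b, max (x b (l + w a - w b)) 0 :=
    Finset.single_le_sum (f := fun b => max (x b (l + w a - w b)) 0)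
      (fun b _ => le_max_right _ _) (Finset.mem_univ a)
  rw [← heq, add_sub_cancel_right, max_eq_left hpos.le] at hone
  simpa using hpos.trans_le hone

/-- Concatenation of the blocks at positions `0, …, r - 1`. -/
def blockPrefix {m : ℕ} (C : ZMod m → List (ZMod m)) (r : ℕ) : List (ZMod m) :=
  (List.range r).flatMap fun j : ℕ => C (j : ZMod m)

theorem blockPrefix_succ {m : ℕ} (C : ZMod m → List (ZMod m)) (r : ℕ) :
    blockPrefix C (r + 1) = blockPrefix C r ++ C (r : ZMod m) := by
  simp [blockPrefix, List.range_succ]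

theorem blockPrefix_mono {m : ℕ} (C : ZMod m → List (ZMod m)) {r r' : ℕ} (h : r ≤ r') :
    blockPrefix C r <+: blockPrefix C r' := by
  induction r', h using Nat.le_induction with
  | base => exact List.prefix_rfl
  | succ r' _ ih => exact ih.trans (blockPrefix_succ C r' ▸ List.prefix_append _ _)

/-- The right end of the block at position `l`. -/
def blockEnd {m : ℕ} (C : ZMod m → List (ZMod m)) (l : ZMod m) : ℕ :=
  (blockPrefix C (l.val + 1)).length

theorem ZMod.val_sub_one_add_one {m : ℕ} [NeZero m] (l : ZMod m) :
    (l - 1).val + 1 = if l = 0 then m else l.val := by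
  obtain ⟨n, rfl⟩ := Nat.exists_eq_succ_of_ne_zero (NeZero.ne m)
  split_ifs with h
  · subst h
    rw [zero_sub, ZMod.val_neg_one]
  · have h1 : l.val ≠ 0 := by rwa [Ne, ZMod.val_eq_zero]
    have h2 : l - 1 = ((l.val - 1 : ℕ) : ZMod (n + 1)) := by
      rw [Nat.cast_sub (by omega)]; simp
    have h3 := ZMod.val_lt l
    rw [h2, ZMod.val_natCast_of_lt (by omega)]
    omega

theorem count_blockPrefix {m : ℕ} [NeZero m] (C : ZMod m → List (ZMod m)) (l z : ZMod m) :
    (blockPrefix C (l.val + 1)).count z + (if l = 0 then (blockPrefix C m).count z else 0) =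
      (blockPrefix C ((l - 1).val + 1)).count z + (C l).count z := by
  rw [ZMod.val_sub_one_add_one]
  split_ifs with h
  · subst h
    simp [blockPrefix, add_comm]
  · simp [blockPrefix_succ]

theorem count_blockPrefix_eq_sum {m : ℕ} [NeZero m] (C : ZMod m → List (ZMod m)) (z : ZMod m) :
    (blockPrefix C m).count z = ∑ x, (C x).count z := by
  have h : ∀ r, (blockPrefix C r).count z = ∑ j ∈ Finset.range r, (C (j : ZMod m)).count z := by
    intro r
    induction r with
    | zero => simp [blockPrefix]
    | succ r ih => rw [blockPrefix_succ, List.count_append, ih, Finset.sum_range_succ]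
  rw [h]
  refine Finset.sum_bij' (fun j _ => (j : ZMod m)) (fun x _ => x.val) ?_ ?_ ?_ ?_ ?_
  · simp
  · intro x _; simpa using ZMod.val_lt x
  · intro j hj; exact ZMod.val_natCast_of_lt (by simpa using hj)
  · simp
  · simp

theorem concatFrom_eq_blockPrefix (m : ℕ) (s : ZMod m) (B : ZMod m → List (ZMod m)) :
    concatFrom m s B = blockPrefix (fun l => B (s + l)) m := rfl

theorem concatFrom_perm (m : ℕ) [NeZero m] (s t : ZMod m) (u : List (ZMod m)) :
    (concatFrom m s (walkBlocks m t u)).Perm u := by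
  rw [List.perm_iff_count]
  intro z
  rw [concatFrom_eq_blockPrefix, count_blockPrefix_eq_sum, ← sum_count_walkBlocks m u t z]
  exact Equiv.sum_comp (Equiv.addLeft s) fun x => (walkBlocks m t u x).count z

theorem List.count_take_eq_sum {α : Type*} [DecidableEq α] (W : List α) (q : ℕ) (z : α) :
    (W.take q).count z =
      ∑ a : Fin W.length, if (a : ℕ) < q ∧ W.get a = z then 1 else 0 := by
  induction W generalizing q with
  | nil => simp
  | cons v W ih =>
    cases q with
    | zero => simp
    | succ q =>
      rw [List.take_succ_cons, List.count_cons, ih]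
      simp only [List.length_cons]
      rw [Fin.sum_univ_succ]
      simp [add_comm]

theorem blockPrefix_eq_take {m : ℕ} [NeZero m] (C : ZMod m → List (ZMod m)) (l : ZMod m) :
    blockPrefix C (l.val + 1) = (blockPrefix C m).take (blockEnd C l) :=
  List.prefix_iff_eq_take.mp (blockPrefix_mono C (ZMod.val_lt l))

theorem sum_lt_blockEnd_sub {m : ℕ} [NeZero m] (C : ZMod m → List (ZMod m))
    {W : List (ZMod m)} (hW : blockPrefix C m = W) (l : ZMod m) :
    ∑ a : Fin W.length, (if (a : ℕ) < blockEnd C (l - W.get a) then 1 else 0) + W.count l =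
      ∑ a : Fin W.length, (if (a : ℕ) < blockEnd C (l - 1 - W.get a) then 1 else 0) +
        ∑ y, (C y).count (l - y) := by
  have h : ∀ l, ∑ a : Fin W.length, (if (a : ℕ) < blockEnd C (l - W.get a) then 1 else 0) =
      ∑ z, (blockPrefix C ((l - z).val + 1)).count z := by
    intro l
    simp only [blockPrefix_eq_take, hW, List.count_take_eq_sum]
    rw [Finset.sum_comm]
    refine Finset.sum_congr rfl fun a _ => ?_
    rw [Finset.sum_eq_single (W.get a)]
    · simp
    · intro z _ hz
      exact if_neg fun h => hz h.2.symm
    · simp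
  have hy : ∑ y, (C y).count (l - y) = ∑ z, (C (l - z)).count z := by
    rw [← (Equiv.subLeft l).sum_comp fun y => (C y).count (l - y)]
    simp
  rw [h, h, hy, ← Finset.sum_add_distrib]
  have hl : W.count l = ∑ z, if l - z = 0 then (blockPrefix C m).count z else 0 := by
    simp [sub_eq_zero, hW]
  rw [hl, ← Finset.sum_add_distrib]
  refine Finset.sum_congr rfl fun z _ => ?_
  rw [count_blockPrefix, sub_right_comm]

theorem blockEnd_add {m : ℕ} [NeZero m] (C : ZMod m → List (ZMod m)) (l : ZMod m) :
    blockEnd C l + (if l = 0 then (blockPrefix C m).length else 0) =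
      blockEnd C (l - 1) + (C l).length := by
  unfold blockEnd
  rw [ZMod.val_sub_one_add_one]
  split_ifs with h
  · subst h
    simp [blockPrefix, add_comm]
  · simp [blockPrefix_succ]

theorem blockEnd_le {m : ℕ} [NeZero m] (C : ZMod m → List (ZMod m)) (l : ZMod m) :
    blockEnd C l ≤ (blockPrefix C m).length :=
  (blockPrefix_mono C (ZMod.val_lt l)).length_le

theorem sum_lt_eq {n q : ℕ} (h : q ≤ n) :
    ∑ a : Fin n, (if (a : ℕ) < q then 1 else 0) = q := by
  rw [Fin.sum_univ_eq_sum_range (fun a => if a < q then 1 else 0), Finset.sum_boole]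
  have : (Finset.range n).filter (· < q) = Finset.range q := by
    ext; simp; omega
  simp [this]

/-- For two partitions with the same balance of departures and arrivals, the letters lying
between the right ends of the two blocks at `l` lead to positions whose right ends compare
in the same way. -/
theorem blockEnd_lt_of_mem {m : ℕ} [NeZero m] {C C' : ZMod m → List (ZMod m)}
    {W : List (ZMod m)} (hW : blockPrefix C m = W) (hW' : blockPrefix C' m = W)
    (hbal : ∀ l, (C l).length + ∑ y, (C' y).count (l - y) =
      (C' l).length + ∑ y, (C y).count (l - y))
    (l : ZMod m) (a : Fin W.length) (h1 : blockEnd C l ≤ a) (h2 : (a : ℕ) < blockEnd C' l) :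
    blockEnd C (l + W.get a) < blockEnd C' (l + W.get a) := by
  have hsum : ∀ (D : ZMod m → List (ZMod m)), blockPrefix D m = W → ∀ l,
      ∑ b : Fin W.length, (if (b : ℕ) < blockEnd D l then (1 : ℤ) else 0) = blockEnd D l := by
    intro D hD l
    exact_mod_cast sum_lt_eq (hD ▸ blockEnd_le D l)
  have key := sum_pos_of_translate W.get
    (fun b l => (if (b : ℕ) < blockEnd C' l then (1 : ℤ) else 0) -
      if (b : ℕ) < blockEnd C l then 1 else 0) ?_ ?_ a l ?_
  · rw [Finset.sum_sub_distrib, hsum C' hW', hsum C hW] at key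
    omega
  · intro l
    rcases le_total (blockEnd C l) (blockEnd C' l) with h | h
    · left; intro b; split_ifs <;> omega
    · right; intro b; split_ifs <;> omega
  · intro l
    have e := sum_lt_blockEnd_sub C hW l
    have e' := sum_lt_blockEnd_sub C' hW' l
    have f := blockEnd_add C l
    have f' := blockEnd_add C' l
    have g := hbal l
    rw [hW] at f
    rw [hW'] at f'
    simp only [Finset.sum_sub_distrib, hsum C' hW', hsum C hW]
    zify at f f' g
    have e := congrArg (Nat.cast : ℕ → ℤ) e
    have e' := congrArg (Nat.cast : ℕ → ℤ) e'
    push_cast at e e'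
    linarith
  · simp [h2, not_lt.mpr h1]

theorem getElem?_blockEnd {m : ℕ} [NeZero m] (C : ZMod m → List (ZMod m)) (l v : ZMod m)
    (hv : v ∈ (C l).getLast?) :
    0 < blockEnd C l ∧ (blockPrefix C m)[blockEnd C l - 1]? = some v := by
  have hne : C l ≠ [] := by rintro h; simp [h] at hv
  have hlast : (blockPrefix C (l.val + 1)).getLast? = some v := by
    rw [blockPrefix_succ, ZMod.natCast_zmod_val, List.getLast?_append_of_ne_nil _ hne]
    exact hv
  have hpos : 0 < blockEnd C l := by
    rw [blockEnd, blockPrefix_succ, ZMod.natCast_zmod_val, List.length_append]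
    have := List.length_pos_iff.mpr hne
    omega
  refine ⟨hpos, ?_⟩
  rw [List.getLast?_eq_getElem?, blockPrefix_eq_take, List.length_take,
    min_eq_left (blockEnd_le C l), List.getElem?_take] at hlast
  rwa [if_pos (by omega)] at hlast

theorem blockEnd_le_of_walkBlocks {m : ℕ} [NeZero m] (u u' : List (ZMod m))
    (hs : u.sum = u'.sum)
    (h : concatFrom m (u.sum + 1) (walkBlocks m 0 u) =
      concatFrom m (u.sum + 1) (walkBlocks m 0 u')) (l : ZMod m) :
    blockEnd (fun l => walkBlocks m 0 u' (u.sum + 1 + l)) l ≤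
      blockEnd (fun l => walkBlocks m 0 u (u.sum + 1 + l)) l := by
  set s := u.sum + 1 with hsdef
  set C := fun l => walkBlocks m 0 u (s + l) with hC
  set C' := fun l => walkBlocks m 0 u' (s + l) with hC'
  have hW : blockPrefix C m = blockPrefix C' m := h
  have hbal : ∀ l, (C l).length + ∑ y, (C' y).count (l - y) =
      (C' l).length + ∑ y, (C y).count (l - y) := by
    intro l
    have e := length_walkBlocks_add m u 0 (s + l)
    have e' := length_walkBlocks_add m u' 0 (s + l)
    rw [← hs] at e'
    rw [← Equiv.sum_comp (Equiv.addLeft s)] at e e'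
    simp only [Equiv.coe_addLeft, add_sub_add_left_eq_sub] at e e'
    simp only [hC, hC']
    omega
  by_contra! hlt
  have hend : (0 : ZMod m) + u'.sum ∈ {x | blockEnd C (x - s) < blockEnd C' (x - s)} := by
    apply end_mem_of_last_exit_mem
    · intro x hx v hv
      have hv' : v ∈ (C' (x - s)).getLast? := by simpa [hC'] using hv
      obtain ⟨hpos, hget⟩ := getElem?_blockEnd C' (x - s) v hv'
      obtain ⟨hlen, hget⟩ := List.getElem?_eq_some_iff.mp hget
      have := blockEnd_lt_of_mem hW rfl hbal (x - s) ⟨_, hlen⟩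
        (Nat.le_sub_one_of_lt hx) (Nat.sub_lt hpos one_pos)
      rw [List.get_eq_getElem, hget] at this
      rwa [Set.mem_ofPred_eq, add_sub_right_comm]
    · right
      by_contra! hempty
      have hcon : ∀ j : ℕ, j < m → ¬ blockEnd C (j : ZMod m) < blockEnd C' (j : ZMod m) := by
        intro j
        induction j with
        | zero =>
          intro _ hj
          have := hempty (s + ((0 : ℕ) : ZMod m)) (by simpa using hj)
          have h0 : C' 0 = [] := by simpa [hC'] using this
          simp [blockEnd, blockPrefix, h0] at hj
        | succ j ih =>
          intro hjm hj
          have := hempty (s + ((j + 1 : ℕ) : ZMod m)) (by simpa using hj)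
          have h0 : C' ((j + 1 : ℕ) : ZMod m) = [] := by simpa [hC'] using this
          have hne : ((j + 1 : ℕ) : ZMod m) ≠ 0 := by
            intro h
            have := congrArg ZMod.val h
            rw [ZMod.val_natCast_of_lt hjm, ZMod.val_zero] at this
            omega
          have f := blockEnd_add C ((j + 1 : ℕ) : ZMod m)
          have f' := blockEnd_add C' ((j + 1 : ℕ) : ZMod m)
          have hsub : ((j + 1 : ℕ) : ZMod m) - 1 = (j : ZMod m) := by simp
          rw [if_neg hne, hsub] at f f'
          rw [h0, List.length_nil] at f'
          have := ih (by omega)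
          omega
      have := hcon l.val (ZMod.val_lt l)
      rw [ZMod.natCast_zmod_val] at this
      exact this hlt
  have hneg : (0 : ZMod m) + u'.sum - s = 0 - 1 := by rw [hsdef, hs]; ring
  rw [Set.mem_ofPred_eq, hneg] at hend
  unfold blockEnd at hend
  rw [ZMod.val_sub_one_add_one, if_pos rfl, hW] at hend
  exact lt_irrefl _ hend

theorem concatFrom_walkBlocks_injective {m : ℕ} [NeZero m] (u u' : List (ZMod m))
    (hl : u.length = u'.length)
    (h : concatFrom m (u.sum + 1) (walkBlocks m 0 u) =
      concatFrom m (u'.sum + 1) (walkBlocks m 0 u')) : u = u' := by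
  have hs : u.sum = u'.sum := by
    rw [← (concatFrom_perm m (u.sum + 1) 0 u).sum_eq, h, (concatFrom_perm m _ 0 u').sum_eq]
  rw [← hs] at h
  apply walkBlocks_injective m u u' hl 0
  set C := fun l => walkBlocks m 0 u (u.sum + 1 + l) with hC
  set C' := fun l => walkBlocks m 0 u' (u.sum + 1 + l) with hC'
  have hW : blockPrefix C m = blockPrefix C' m := h
  have hE : ∀ l, blockEnd C l = blockEnd C' l := by
    intro l
    refine le_antisymm ?_ (blockEnd_le_of_walkBlocks u u' hs h l)
    have := blockEnd_le_of_walkBlocks u' u hs.symm (by rw [← hs]; exact h.symm) l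
    rwa [← hs] at this
  have hP : ∀ l : ZMod m, blockPrefix C (l.val + 1) = blockPrefix C' (l.val + 1) := by
    intro l
    rw [blockPrefix_eq_take, blockPrefix_eq_take, hW, hE]
  have hCC : ∀ l, C l = C' l := by
    intro l
    have h1 := hP l
    rw [blockPrefix_succ, blockPrefix_succ, ZMod.natCast_zmod_val] at h1
    have hlen := blockEnd_add C l
    have hlen' := blockEnd_add C' l
    rw [hW, hE, hE] at hlen
    exact (List.append_inj' h1 (by omega)).2
  funext x
  simpa [hC, hC'] using hCC (x - (u.sum + 1))

/-- Every word of length `k+1` over `ℤ/mℤ` admits a successful partition: a splitting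
into `m` consecutive blocks labeled cyclically starting with `σ+1` (where `σ` is the
sum of the word), on which the recovery algorithm removes all letters, never reading
from an empty block. -/
theorem successful_partition_exists (m k : ℕ) (hm : 1 ≤ m)
    (w : Fin (k + 1) → ZMod m) :
    ∃ B : ZMod m → List (ZMod m),
      concatFrom m ((∑ i, w i) + 1) B = List.ofFn w ∧
      ∃ out, recover m (k + 1) 0 B = some (out, fun _ => []) := by
  have : NeZero m := ⟨by omega⟩
  let sweep : List.Vector (ZMod m) (k + 1) → List.Vector (ZMod m) (k + 1) := fun u =>
    ⟨concatFrom m (u.1.sum + 1) (walkBlocks m 0 u.1), by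
      rw [(concatFrom_perm m _ 0 u.1).length_eq, u.2]⟩
  have hinj : Function.Injective sweep := fun u u' h =>
    Subtype.ext <| concatFrom_walkBlocks_injective u.1 u'.1 (u.2.trans u'.2.symm)
      (congrArg Subtype.val h)
  obtain ⟨u, hu⟩ := Finite.surjective_of_injective hinj ⟨List.ofFn w, List.length_ofFn⟩
  have hu' : concatFrom m (u.1.sum + 1) (walkBlocks m 0 u.1) = List.ofFn w :=
    congrArg Subtype.val hu
  have hsum : u.1.sum = ∑ i, w i := by
    rw [← (concatFrom_perm m (u.1.sum + 1) 0 u.1).sum_eq, hu', List.sum_ofFn]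
  refine ⟨walkBlocks m 0 u.1, hsum ▸ hu', ?_⟩
  have := recover_walkBlocks m u.1 0
  rwa [u.2] at this
end

section
/- Every word w of length k+1 over Z/mZ admits exactly one successful partition: the splitting of w into m labeled consecutive blocks on which the recovery algorithm succeeds is unique. -/
/-- If the net flow `g` is balanced at every vertex, nonnegative out of `S` and nonpositive
out of the complement of `S`, then nothing flows from `S` to its complement. -/
theorem flow_out_eq_zero {α : Type*} [Fintype α] [DecidableEq α] (S : Finset α)
    (g : α → α → ℤ) (hbal : ∀ x, ∑ y, g x y = ∑ u, g u x)
    (hpos : ∀ u ∈ S, ∀ x, 0 ≤ g u x) (hneg : ∀ u ∉ S, ∀ x, g u x ≤ 0)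
    {u x : α} (hu : u ∈ S) (hx : x ∉ S) : g u x = 0 := by
  have h1 : ∑ a ∈ S, ∑ y, g a y = ∑ a ∈ S, ∑ y ∈ S, g a y + ∑ a ∈ S, ∑ y ∈ Sᶜ, g a y := by
    rw [← Finset.sum_add_distrib]
    exact Finset.sum_congr rfl fun a _ => (Finset.sum_add_sum_compl S _).symm
  have h2 : ∑ y ∈ S, ∑ a, g a y = ∑ y ∈ S, ∑ a ∈ S, g a y + ∑ y ∈ S, ∑ a ∈ Sᶜ, g a y := by
    rw [← Finset.sum_add_distrib]
    exact Finset.sum_congr rfl fun a _ => (Finset.sum_add_sum_compl S _).symm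
  have h3 : ∑ a ∈ S, ∑ y, g a y = ∑ y ∈ S, ∑ a, g a y :=
    Finset.sum_congr rfl fun a _ => hbal a
  have h4 : ∑ y ∈ S, ∑ a ∈ Sᶜ, g a y ≤ 0 :=
    Finset.sum_nonpos fun y _ => Finset.sum_nonpos fun a ha => hneg a (by simpa using ha) y
  have h5 : ∑ a ∈ S, ∑ y ∈ S, g a y = ∑ y ∈ S, ∑ a ∈ S, g a y := Finset.sum_comm
  have h6 : ∀ a ∈ S, 0 ≤ ∑ y ∈ Sᶜ, g a y := fun a ha =>
    Finset.sum_nonneg fun y _ => hpos a ha y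
  have h7 : ∑ a ∈ S, ∑ y ∈ Sᶜ, g a y = 0 :=
    le_antisymm (by linarith) (Finset.sum_nonneg h6)
  exact (Finset.sum_eq_zero_iff_of_nonneg fun y _ => hpos u hu y).1
    ((Finset.sum_eq_zero_iff_of_nonneg h6).1 h7 u hu) x (by simpa using hx)

theorem Finset.sum_comp_sub_right {α M : Type*} [Fintype α] [AddGroup α] [AddCommMonoid M]
    (f : α → M) (a : α) : ∑ x, f (x - a) = ∑ x, f x :=
  (Equiv.subRight a).sum_comp f

theorem ZMod.eq_of_forall_add_one_eq {m : ℕ} [NeZero m] {α : Type*} {D : ZMod m → α}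
    (h : ∀ x, D (x + 1) = D x) (x : ZMod m) : D x = D 0 := by
  have key : ∀ n : ℕ, D (n : ZMod m) = D 0 := by
    intro n
    induction n with
    | zero => simp
    | succ n ih => rw [Nat.cast_succ, h, ih]
  simpa using key x.val

/-- The concatenation of the blocks from label `s` up to and including label `t`. -/
def prefixThrough {m : ℕ} (s : ZMod m) (B : ZMod m → List (ZMod m)) (t : ZMod m) :
    List (ZMod m) :=
  (List.range ((t - s).val + 1)).flatMap (fun j => B (s + (j : ℕ)))

theorem prefixThrough_self {m : ℕ} (s : ZMod m) (B : ZMod m → List (ZMod m)) :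
    prefixThrough s B s = B s := by
  simp [prefixThrough]

section Prefix

variable {m : ℕ} [NeZero m] (s : ZMod m) (B : ZMod m → List (ZMod m))

theorem val_sub_one_add_one {x : ZMod m} (hx : x ≠ 0) : (x - 1).val + 1 = x.val := by
  have h0 : 0 < x.val := Nat.pos_of_ne_zero (by simpa using hx)
  have h : ((x.val - 1 : ℕ) : ZMod m) = x - 1 := by
    rw [Nat.cast_sub h0]; simp
  rw [← h, ZMod.val_cast_of_lt (by have := x.val_lt; omega)]
  omega

theorem prefixThrough_of_ne {u : ZMod m} (hu : u ≠ s) :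
    prefixThrough s B u = prefixThrough s B (u - 1) ++ B u := by
  have h := val_sub_one_add_one (sub_ne_zero.2 hu)
  rw [prefixThrough, prefixThrough, sub_right_comm, h, List.range_succ, List.flatMap_append]
  simp

theorem prefixThrough_sub_one : prefixThrough s B (s - 1) = concatFrom m s B := by
  obtain ⟨n, rfl⟩ := Nat.exists_eq_succ_of_ne_zero (NeZero.ne m)
  rw [prefixThrough, concatFrom, sub_right_comm, sub_self, zero_sub]
  rw [ZMod.val_neg_one]

theorem prefixThrough_isPrefix (u : ZMod m) : prefixThrough s B u <+: concatFrom m s B := by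
  have h := (u - s).val_lt
  rw [prefixThrough, concatFrom]
  obtain ⟨d, hd⟩ := Nat.exists_eq_add_of_le (Nat.succ_le_of_lt h)
  rw [show List.range m = _ from (congrArg List.range hd).trans (List.range_add ..),
    List.flatMap_append]
  exact List.prefix_append _ _

theorem apply_block_eq {G : Type*} [AddCommGroup G] (f : List (ZMod m) → G)
    (hf : ∀ a b, f (a ++ b) = f a + f b) (u : ZMod m) :
    f (B u) = f (prefixThrough s B u) - f (prefixThrough s B (u - 1)) +
      if u = s then f (concatFrom m s B) else 0 := by
  by_cases hu : u = s
  · subst hu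
    simp [prefixThrough_self, prefixThrough_sub_one]
  · rw [prefixThrough_of_ne s B hu, hf]
    simp [hu]

theorem sum_apply_block {G : Type*} [AddCommGroup G] (f : List (ZMod m) → G)
    (hf : ∀ a b, f (a ++ b) = f a + f b) : ∑ u, f (B u) = f (concatFrom m s B) := by
  simp_rw [apply_block_eq s B f hf]
  rw [Finset.sum_add_distrib, Finset.sum_sub_distrib,
    Finset.sum_comp_sub_right (fun u => f (prefixThrough s B u)) 1]
  simp

variable {s B} in
theorem eq_of_prefixThrough_length_eq {B' : ZMod m → List (ZMod m)}
    (hW : concatFrom m s B = concatFrom m s B')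
    (h : ∀ u, (prefixThrough s B u).length = (prefixThrough s B' u).length) : B = B' := by
  have hP : ∀ u, prefixThrough s B u = prefixThrough s B' u := fun u => by
    have h1 := prefixThrough_isPrefix s B u
    rw [hW] at h1
    exact (List.prefix_of_prefix_length_le h1 (prefixThrough_isPrefix s B' u)
      (h u).le).eq_of_length (h u)
  funext u
  by_cases hu : u = s
  · subst hu
    rw [← prefixThrough_self u B, ← prefixThrough_self u B', hP]
  · have h1 := hP u
    rw [prefixThrough_of_ne s B hu, prefixThrough_of_ne s B' hu, hP] at h1
    exact List.append_cancel_left h1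

variable {s B} in
theorem exists_block_ne_nil {B' : ZMod m → List (ZMod m)} {u : ZMod m}
    (hu : (prefixThrough s B u).length < (prefixThrough s B' u).length) :
    ∃ x, (prefixThrough s B x).length < (prefixThrough s B' x).length ∧ B' x ≠ [] := by
  induction hn : (u - s).val generalizing u with
  | zero =>
    have : u = s := by simpa [sub_eq_zero] using hn
    subst this
    refine ⟨u, hu, fun h => ?_⟩
    simp [prefixThrough_self, h] at hu
  | succ n ih =>
    have hne : u ≠ s := by rintro rfl; simp at hn
    by_cases h : B' u = []
    · refine ih (u := u - 1) ?_ ?_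
      · rw [prefixThrough_of_ne s B hne, prefixThrough_of_ne s B' hne] at hu
        simp [h] at hu
        omega
      · have := val_sub_one_add_one (sub_ne_zero.2 hne)
        rw [sub_right_comm]
        omega
    · exact ⟨u, hu, h⟩

end Prefix

theorem recover_succ_eq_some {m n : ℕ} {t : ZMod m} {B C : ZMod m → List (ZMod m)}
    {out : List (ZMod m)} (h : recover m (n + 1) t B = some (out, C)) :
    ∃ v rest out', B t = v :: rest ∧
      recover m n (t + v) (Function.update B t rest) = some (out', C) := by
  rw [recover] at h
  split at h
  · simp at h
  · rename_i v rest hB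
    simp only [Option.map_eq_some_iff, Prod.exists, Prod.mk.injEq] at h
    obtain ⟨o, C', h1, -, rfl⟩ := h
    exact ⟨v, rest, o, hB, h1⟩

section Recover

variable {m : ℕ} [NeZero m]

theorem sum_apply_of_cons {G : Type*} [AddCommMonoid G] (f : ZMod m → List (ZMod m) → G)
    {t : ZMod m} {B : ZMod m → List (ZMod m)} {rest : List (ZMod m)} {c : G}
    (hf : f t (B t) = f t rest + c) :
    ∑ u, f u (B u) = ∑ u, f u (Function.update B t rest u) + c := by
  rw [← Finset.add_sum_erase _ _ (Finset.mem_univ t),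
    ← Finset.add_sum_erase _ (fun u => f u (Function.update B t rest u))
      (Finset.mem_univ t)]
  have : ∑ u ∈ Finset.univ.erase t, f u (Function.update B t rest u) =
      ∑ u ∈ Finset.univ.erase t, f u (B u) :=
    Finset.sum_congr rfl fun u hu => by
      rw [Function.update_of_ne (Finset.ne_of_mem_erase hu)]
  rw [this, hf, Function.update_self]
  abel

/-- Arrivals balance departures, up to the start and the end of the walk. -/
theorem recover_balance {n : ℕ} {t : ZMod m} {B : ZMod m → List (ZMod m)}
    {out : List (ZMod m)} (h : recover m n t B = some (out, fun _ => [])) (x : ZMod m) :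
    ∑ u, ((B u).count (x - u) : ℤ) + (if x = t then 1 else 0) =
      (B x).length + if x = t + ∑ u, (B u).sum then 1 else 0 := by
  induction n generalizing t B out with
  | zero =>
    simp only [recover, Option.some.injEq, Prod.mk.injEq] at h
    obtain ⟨-, rfl⟩ := h
    simp
  | succ n ih =>
    obtain ⟨v, rest, out', hB, h'⟩ := recover_succ_eq_some h
    have h1 := ih h'
    have hsum : ∑ u, (B u).sum = ∑ u, (Function.update B t rest u).sum + v :=
      sum_apply_of_cons (fun _ l => l.sum) (by simp [hB, add_comm])
    have hcount : ∑ u, ((B u).count (x - u) : ℤ) =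
        ∑ u, ((Function.update B t rest u).count (x - u) : ℤ) +
          (if x = t + v then 1 else 0) :=
      sum_apply_of_cons (fun u l => (l.count (x - u) : ℤ)) (by
        have : v = x - t ↔ x = t + v := by
          rw [eq_sub_iff_add_eq', eq_comm]
        simp [hB, List.count_cons, this])
    have hlen : ((B x).length : ℤ) = (Function.update B t rest x).length +
        (if x = t then 1 else 0) := by
      by_cases hx : x = t
      · subst hx; simp [hB]
      · simp [hx]
    have he : t + v + ∑ u, (Function.update B t rest u).sum = t + ∑ u, (B u).sum := by
      rw [hsum]; abel
    rw [he] at h1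
    rw [hcount, hlen]
    linarith

/-- A walk that ends outside `S` leaves `S` through the last letter of some block. -/
theorem recover_exists_last_exit {n : ℕ} {t : ZMod m} {B : ZMod m → List (ZMod m)}
    {out : List (ZMod m)} (h : recover m n t B = some (out, fun _ => [])) (S : Set (ZMod m))
    (he : t + ∑ u, (B u).sum ∉ S) (hS : ∃ x ∈ S, B x ≠ []) :
    ∃ x ∈ S, ∃ l v, B x = l ++ [v] ∧ x + v ∉ S := by
  induction n generalizing t B out with
  | zero =>
    simp only [recover, Option.some.injEq, Prod.mk.injEq] at h
    obtain ⟨-, rfl⟩ := h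
    simp at hS
  | succ n ih =>
    obtain ⟨v, rest, out', hB, h'⟩ := recover_succ_eq_some h
    have hsum : ∑ u, (B u).sum = ∑ u, (Function.update B t rest u).sum + v :=
      sum_apply_of_cons (fun _ l => l.sum) (by simp [hB, add_comm])
    have he' : t + v + ∑ u, (Function.update B t rest u).sum ∉ S := by
      rwa [hsum, add_comm _ v, ← add_assoc] at he
    by_cases hS' : ∃ x ∈ S, Function.update B t rest x ≠ []
    · obtain ⟨x, hx, l, a, hl, ha⟩ := ih h' he' hS'
      by_cases hxt : x = t
      · subst hxt
        rw [Function.update_self] at hl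
        exact ⟨x, hx, v :: l, a, by simp [hB, hl], ha⟩
      · rw [Function.update_of_ne hxt] at hl
        exact ⟨x, hx, l, a, hl, ha⟩
    · push Not at hS'
      obtain ⟨x, hx, hne⟩ := hS
      have hxt : x = t := by
        by_contra hxt
        exact hne (by simpa [Function.update_of_ne hxt] using hS' x hx)
      subst hxt
      have hrest : rest = [] := by simpa using hS' x hx
      refine ⟨x, hx, [], v, by simp [hB, hrest], fun hv => ?_⟩
      cases n with
      | zero =>
        simp only [recover, Option.some.injEq, Prod.mk.injEq] at h'
        simp [h'.2, hv] at he'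
      | succ n =>
        obtain ⟨_, _, _, h1, -⟩ := recover_succ_eq_some h'
        rw [hS' _ hv] at h1
        simp at h1

end Recover

section Unique

variable {m : ℕ} [NeZero m]

theorem sum_count_sub_eq_length (l : List (ZMod m)) (u : ZMod m) :
    ∑ x, (l.count (x - u) : ℤ) = l.length := by
  rw [Finset.sum_comp_sub_right (fun x => (l.count x : ℤ)) u]
  have := Multiset.sum_count_eq_card (s := Finset.univ) (m := (l : Multiset (ZMod m)))
    (fun _ _ => Finset.mem_univ _)
  simp only [Multiset.coe_count, Multiset.coe_card] at this
  exact_mod_cast this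

theorem sum_count_block (s : ZMod m) (B : ZMod m → List (ZMod m)) (x : ZMod m) :
    ∑ u, ((B u).count (x + 1 - u) : ℤ) =
      ∑ u, ((prefixThrough s B u).count (x + 1 - u) : ℤ) -
      ∑ u, ((prefixThrough s B u).count (x - u) : ℤ) +
      (concatFrom m s B).count (x + 1 - s) := by
  have h : ∀ u, ((B u).count (x + 1 - u) : ℤ) =
      ((prefixThrough s B u).count (x + 1 - u) : ℤ) -
        (prefixThrough s B (u - 1)).count (x - (u - 1)) +
        if u = s then ((concatFrom m s B).count (x + 1 - s) : ℤ) else 0 := fun u => by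
    have := apply_block_eq s B (fun l => (l.count (x + 1 - u) : ℤ)) (by simp) u
    rw [this, show x - (u - 1) = x + 1 - u by abel]
    by_cases hu : u = s <;> simp [hu]
  simp_rw [h]
  rw [Finset.sum_add_distrib, Finset.sum_sub_distrib,
    Finset.sum_comp_sub_right
      (fun u => ((prefixThrough s B u).count (x - u) : ℤ)) 1]
  simp

/-- The difference of the prefix counts of two balanced partitions is a balanced flow. -/
theorem prefixThrough_flow_balance {s a e : ZMod m} {B B' : ZMod m → List (ZMod m)}
    (hW : concatFrom m s B = concatFrom m s B')
    (hB : ∀ x, ∑ u, ((B u).count (x - u) : ℤ) + (if x = a then 1 else 0) =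
      (B x).length + if x = e then 1 else 0)
    (hB' : ∀ x, ∑ u, ((B' u).count (x - u) : ℤ) + (if x = a then 1 else 0) =
      (B' x).length + if x = e then 1 else 0) (x : ZMod m) :
    ∑ y, (((prefixThrough s B' x).count (y - x) : ℤ) - (prefixThrough s B x).count (y - x)) =
    ∑ u, (((prefixThrough s B' u).count (x - u) : ℤ) - (prefixThrough s B u).count (x - u)) := by
  set D : ZMod m → ℤ := fun x =>
    ∑ y, (((prefixThrough s B' x).count (y - x) : ℤ) - (prefixThrough s B x).count (y - x)) -
    ∑ u, (((prefixThrough s B' u).count (x - u) : ℤ) - (prefixThrough s B u).count (x - u))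
    with hD
  have hstep : ∀ x, D (x + 1) = D x := by
    intro x
    have h1 := hB (x + 1)
    have h2 := hB' (x + 1)
    have l1 := apply_block_eq s B (fun l => (l.length : ℤ)) (by simp) (x + 1)
    have l2 := apply_block_eq s B' (fun l => (l.length : ℤ)) (by simp) (x + 1)
    rw [sum_count_block s, l1, add_sub_cancel_right] at h1
    rw [sum_count_block s, l2, add_sub_cancel_right, ← hW] at h2
    simp only [hD, Finset.sum_sub_distrib, sum_count_sub_eq_length]
    linarith
  have hsum : ∑ x, D x = 0 := by
    simp only [hD]
    rw [Finset.sum_sub_distrib, sub_eq_zero, Finset.sum_comm]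
  have hconst := ZMod.eq_of_forall_add_one_eq hstep
  have h0 : D 0 = 0 := by
    simp_rw [hconst] at hsum
    simpa [NeZero.ne m] using hsum
  have := hconst x
  rw [h0] at this
  exact sub_eq_zero.1 this

theorem prefixThrough_length_le {n n' : ℕ} {B B' : ZMod m → List (ZMod m)}
    {W out out' : List (ZMod m)} {t : ZMod m}
    (hW : concatFrom m (t + W.sum + 1) B = W) (hW' : concatFrom m (t + W.sum + 1) B' = W)
    (h : recover m n t B = some (out, fun _ => []))
    (h' : recover m n' t B' = some (out', fun _ => [])) (u : ZMod m) :
    (prefixThrough (t + W.sum + 1) B' u).length ≤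
      (prefixThrough (t + W.sum + 1) B u).length := by
  set s := t + W.sum + 1 with hs
  have hσ : ∑ u, (B u).sum = W.sum := by
    rw [sum_apply_block s B List.sum (by simp), hW]
  have hσ' : ∑ u, (B' u).sum = W.sum := by
    rw [sum_apply_block s B' List.sum (by simp), hW']
  have hbal := recover_balance h
  have hbal' := recover_balance h'
  rw [hσ] at hbal
  rw [hσ'] at hbal'
  have hpre := prefixThrough_isPrefix s B
  have hpre' := prefixThrough_isPrefix s B'
  rw [hW] at hpre
  rw [hW'] at hpre'
  by_contra! hu
  let S : Finset (ZMod m) :=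
    {x | (prefixThrough s B x).length < (prefixThrough s B' x).length}
  have hmem : ∀ x, x ∈ S ↔ (prefixThrough s B x).length < (prefixThrough s B' x).length :=
    fun x => by simp [S]
  have hclosed := fun x v => flow_out_eq_zero (u := x) (x := x + v) S _
    (prefixThrough_flow_balance (hW.trans hW'.symm) hbal hbal')
    (fun u hu x => sub_nonneg.2 (Nat.cast_le.2 ((List.prefix_of_prefix_length_le
      (hpre u) (hpre' u) ((hmem u).1 hu).le).sublist.count_le _)))
    (fun u hu x => sub_nonpos.2 (Nat.cast_le.2 ((List.prefix_of_prefix_length_le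
      (hpre' u) (hpre u) (not_lt.1 (mt (hmem u).2 hu))).sublist.count_le _)))
  have hend : t + ∑ u, (B' u).sum ∉ (S : Set (ZMod m)) := by
    rw [hσ', show t + W.sum = s - 1 by rw [hs]; abel, Finset.mem_coe, hmem,
      prefixThrough_sub_one, prefixThrough_sub_one, hW, hW']
    exact lt_irrefl _
  obtain ⟨y, hy, hne⟩ := exists_block_ne_nil hu
  obtain ⟨x, hx, l, v, hl, hv⟩ := recover_exists_last_exit h' S hend
    ⟨y, Finset.mem_coe.2 ((hmem y).2 hy), hne⟩
  have hflow := hclosed x v hx hv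
  have hlt := (hmem x).1 hx
  obtain ⟨Q, hQ⟩ : ∃ Q, prefixThrough s B' x = Q ++ [v] := by
    by_cases hxs : x = s
    · subst hxs
      exact ⟨l, by rw [prefixThrough_self, hl]⟩
    · exact ⟨prefixThrough s B' (x - 1) ++ l, by
        rw [prefixThrough_of_ne s B' hxs, hl, List.append_assoc]⟩
  have hPQ : prefixThrough s B x <+: Q := by
    refine List.prefix_of_prefix_length_le (hpre x)
      ((List.prefix_append Q [v]).trans (hQ ▸ hpre' x)) ?_
    rw [hQ] at hlt
    simpa [Nat.lt_succ_iff] using hlt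
  have hle := hPQ.sublist.count_le v
  rw [hQ, add_sub_cancel_left, List.count_append, List.count_singleton_self] at hflow
  push_cast at hflow
  omega

theorem eq_of_recover {n n' : ℕ} {B B' : ZMod m → List (ZMod m)}
    {W out out' : List (ZMod m)} {t : ZMod m}
    (hW : concatFrom m (t + W.sum + 1) B = W) (hW' : concatFrom m (t + W.sum + 1) B' = W)
    (h : recover m n t B = some (out, fun _ => []))
    (h' : recover m n' t B' = some (out', fun _ => [])) : B = B' :=
  eq_of_prefixThrough_length_eq (hW.trans hW'.symm) fun u =>
    le_antisymm (prefixThrough_length_le hW' hW h' h u) (prefixThrough_length_le hW hW' h h' u)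

end Unique

/-- The blocks from which the recovery algorithm started at `t` produces a given output. -/
def blocksOf {m : ℕ} : ZMod m → List (ZMod m) → ZMod m → List (ZMod m)
  | _, [] => fun _ => []
  | t, o :: os => Function.update (blocksOf o os) t ((o - t) :: blocksOf o os t)

theorem recover_blocksOf {m : ℕ} (t : ZMod m) (os : List (ZMod m)) :
    recover m os.length t (blocksOf t os) = some (os, fun _ => []) := by
  induction os generalizing t with
  | nil => rfl
  | cons o os ih => simp [recover, blocksOf, ih]

theorem sum_length_blocksOf {m : ℕ} [NeZero m] (t : ZMod m) (os : List (ZMod m)) :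
    ∑ u, ((blocksOf t os u).length : ℤ) = os.length := by
  induction os generalizing t with
  | nil => simp [blocksOf]
  | cons o os ih =>
    rw [sum_apply_of_cons (fun _ l => (l.length : ℤ)) (t := t)
      (rest := blocksOf o os t) (c := 1) (by simp [blocksOf])]
    simp [blocksOf, ih]

/-- The word whose successful partition has a given output. -/
def wordOf {m : ℕ} [NeZero m] (os : List (ZMod m)) : List (ZMod m) :=
  concatFrom m (∑ u, (blocksOf 0 os u).sum + 1) (blocksOf 0 os)

section WordOf

variable {m : ℕ} [NeZero m]

theorem length_wordOf (os : List (ZMod m)) : (wordOf os).length = os.length := by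
  have h := sum_apply_block (∑ u, (blocksOf 0 os u).sum + 1) (blocksOf 0 os)
    (fun l => (l.length : ℤ)) (by simp)
  rw [sum_length_blocksOf] at h
  exact_mod_cast h.symm

theorem concatFrom_sum_wordOf (os : List (ZMod m)) :
    concatFrom m ((wordOf os).sum + 1) (blocksOf 0 os) = wordOf os := by
  rw [wordOf, ← sum_apply_block _ (blocksOf 0 os) List.sum (by simp)]

theorem wordOf_injective : Function.Injective (wordOf (m := m)) := by
  intro os os' h
  have hB : blocksOf 0 os = blocksOf 0 os' := eq_of_recover (W := wordOf os)
    (by rw [zero_add, concatFrom_sum_wordOf]) (by rw [zero_add, h, concatFrom_sum_wordOf])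
    (recover_blocksOf 0 os) (recover_blocksOf 0 os')
  have hlen : os.length = os'.length := by rw [← length_wordOf, h, length_wordOf]
  have h1 := recover_blocksOf 0 os
  rw [hB, hlen, recover_blocksOf] at h1
  simpa using h1.symm

theorem wordOf_surjective : Function.Surjective (wordOf (m := m)) := by
  intro W
  let Φ : List.Vector (ZMod m) W.length → List.Vector (ZMod m) W.length :=
    fun os => ⟨wordOf os.1, by rw [length_wordOf, os.2]⟩
  have hΦ : Function.Injective Φ := fun a b h =>
    Subtype.ext (wordOf_injective (congrArg Subtype.val h))
  obtain ⟨os, hos⟩ := Finite.injective_iff_surjective.1 hΦ ⟨W, rfl⟩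
  exact ⟨os.1, congrArg Subtype.val hos⟩

end WordOf

/-- Every word of length `k+1` over `ℤ/mℤ` admits exactly one successful partition: a splitting
into `m` consecutive blocks labeled cyclically starting with `σ+1` (where `σ` is the
sum of the word), on which the recovery algorithm removes all letters, never reading
from an empty block. -/
theorem successful_partition_unique (m k : ℕ) (hm : 1 ≤ m)
    (w : Fin (k + 1) → ZMod m) :
    ∃! B : ZMod m → List (ZMod m),
      concatFrom m ((∑ i, w i) + 1) B = List.ofFn w ∧
      ∃ out, recover m (k + 1) 0 B = some (out, fun _ => []) := by
  have : NeZero m := ⟨by omega⟩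
  rw [← List.sum_ofFn]
  obtain ⟨os, hos⟩ := wordOf_surjective (List.ofFn w)
  have hlen : os.length = k + 1 := by rw [← length_wordOf, hos, List.length_ofFn]
  have hcat := concatFrom_sum_wordOf os
  have hrec := recover_blocksOf 0 os
  rw [hos] at hcat
  rw [hlen] at hrec
  refine ⟨blocksOf 0 os, ⟨hcat, os, hrec⟩, ?_⟩
  rintro B ⟨hB, out, hout⟩
  exact eq_of_recover (W := List.ofFn w) (by rwa [zero_add]) (by rwa [zero_add]) hout hrec
end

section
/- The composite map f ∘ p, where p sends a word x of length k+1 over Z/mZ (with x_0 = 0) to the partitioned word placing x_i - x_{i-1} into block x_{i-1}, and f forgets the partition (concatenating blocks in consecutive label order starting from label σ+1, σ = x_{k+1}), is a bijection from the set of words of length k+1 over Z/mZ to itself. -/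
def Xseq (m k : ℕ) (x : Fin (k + 1) → ZMod m) : ℕ → ZMod m :=
  fun i => if h : 1 ≤ i ∧ i ≤ k + 1 then x ⟨i - 1, by omega⟩ else 0

/-- The map `p`: the letter `tᵢ = xᵢ - x_{i-1}` is appended to block `x_{i-1}`
(with `x₀ = 0`), in increasing order of `i`. -/
def pMap (m k : ℕ) (x : Fin (k + 1) → ZMod m) : ZMod m → List (ZMod m) :=
  fun b => ((List.range (k + 1)).filter (fun i => decide (Xseq m k x i = b))).map
    (fun i => Xseq m k x (i + 1) - Xseq m k x i)

/-- The forgetful map `f` applied to `p x`: read the blocks of `p x` in cyclic label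
order `σ+1, σ+2, …, σ`, where `σ = x_{k+1}` is the last letter of `x`. -/
def fpMap (m k : ℕ) (x : Fin (k + 1) → ZMod m) : List (ZMod m) :=
  concatFrom m (x (Fin.last k) + 1) (pMap m k x)

section Concatenation

/-- The number of letters in the first `n` of the lists `L 0, L 1, …`. -/
def blockOffset {α : Type*} (L : ℕ → List α) (n : ℕ) : ℕ :=
  ∑ r ∈ Finset.range n, (L r).length

/-- The index, among `L 0, …, L (M - 1)`, of the list containing position `j` of their
concatenation. -/
def blockIndex {α : Type*} (L : ℕ → List α) (M j : ℕ) : ℕ :=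
  ((Finset.range M).filter (fun n => blockOffset L (n + 1) ≤ j)).card

variable {α : Type*} (L : ℕ → List α)

lemma blockOffset_succ (n : ℕ) :
    blockOffset L (n + 1) = blockOffset L n + (L n).length :=
  Finset.sum_range_succ _ _

lemma blockOffset_mono : Monotone (blockOffset L) :=
  monotone_nat_of_le_succ fun n => by rw [blockOffset_succ]; omega

lemma length_flatMap_range (M : ℕ) :
    ((List.range M).flatMap L).length = blockOffset L M := by
  induction M with
  | zero => simp [blockOffset]
  | succ M ih => simp [List.range_succ, List.flatMap_append, ih, blockOffset_succ]

lemma getD_flatMap_range (d : α) {M n r : ℕ} (hn : n < M) (hr : r < (L n).length) :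
    ((List.range M).flatMap L).getD (blockOffset L n + r) d = (L n).getD r d := by
  induction M with
  | zero => omega
  | succ M ih =>
    rw [List.range_succ, List.flatMap_append]
    rcases Nat.lt_succ_iff_lt_or_eq.mp hn with h | rfl
    · rw [List.getD_append _ _ _ _ _, ih h]
      rw [length_flatMap_range]
      have := blockOffset_mono L (Nat.succ_le_of_lt h)
      rw [Nat.succ_eq_add_one, blockOffset_succ] at this
      omega
    · rw [List.getD_append_right _ _ _ _ (by rw [length_flatMap_range]; omega),
        length_flatMap_range]
      simp

lemma blockIndex_eq {M n j : ℕ} (hn : n < M) (h1 : blockOffset L n ≤ j)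
    (h2 : j < blockOffset L (n + 1)) : blockIndex L M j = n := by
  have : (Finset.range M).filter (fun n => blockOffset L (n + 1) ≤ j) = Finset.range n := by
    ext r
    simp only [Finset.mem_filter, Finset.mem_range]
    constructor
    · rintro ⟨-, h⟩
      by_contra! hr
      have := blockOffset_mono L (Nat.succ_le_succ hr)
      simp only [Nat.succ_eq_add_one] at this
      omega
    · intro h
      exact ⟨by omega, (blockOffset_mono L h).trans h1⟩
  rw [blockIndex, this, Finset.card_range]

lemma exists_blockOffset_le {M j : ℕ} (hj : j < blockOffset L M) :
    ∃ n < M, blockOffset L n ≤ j ∧ j < blockOffset L (n + 1) := by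
  induction M with
  | zero => simp [blockOffset] at hj
  | succ M ih =>
    by_cases h : j < blockOffset L M
    · obtain ⟨n, hn, h⟩ := ih h
      exact ⟨n, by omega, h⟩
    · exact ⟨M, by omega, by omega, hj⟩

lemma sum_range_blockOffset {A : Type*} [AddCommMonoid A] (f : ℕ → A) (M : ℕ) :
    ∑ j ∈ Finset.range (blockOffset L M), f j =
      ∑ n ∈ Finset.range M, ∑ r ∈ Finset.range (L n).length, f (blockOffset L n + r) := by
  induction M with
  | zero => simp [blockOffset]
  | succ M ih => rw [blockOffset_succ, Finset.sum_range_add, ih, Finset.sum_range_succ]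

lemma sum_map_eq_sum_range {A : Type*} [AddCommMonoid A] (l : List α) (d : α) (g : α → A) :
    (l.map g).sum = ∑ r ∈ Finset.range l.length, g (l.getD r d) := by
  induction l with
  | nil => simp
  | cons a l ih => simp [Finset.sum_range_succ', ih, add_comm]

lemma sum_blockIndex {A : Type*} [AddCommMonoid A] (d : α) (g : ℕ → α → A) (M : ℕ) :
    ∑ j ∈ Finset.range (blockOffset L M),
        g (blockIndex L M j) (((List.range M).flatMap L).getD j d) =
      ∑ n ∈ Finset.range M, ((L n).map (g n)).sum := by
  rw [sum_range_blockOffset]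
  refine Finset.sum_congr rfl fun n hn => ?_
  rw [sum_map_eq_sum_range _ d]
  refine Finset.sum_congr rfl fun r hr => ?_
  rw [Finset.mem_range] at hn hr
  rw [getD_flatMap_range L d hn hr,
    blockIndex_eq L hn (by omega) (by rw [blockOffset_succ]; omega)]

lemma sum_map_flatMap_range {A : Type*} [AddCommMonoid A] (g : α → A) (M : ℕ) :
    (((List.range M).flatMap L).map g).sum =
      ∑ n ∈ Finset.range M, ((L n).map g).sum := by
  induction M with
  | zero => simp
  | succ M ih => simp [List.range_succ, List.flatMap_append, ih, Finset.sum_range_succ]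

lemma eq_of_flatMap_range_eq {L L' : ℕ → List α} {M : ℕ}
    (h : (List.range M).flatMap L = (List.range M).flatMap L')
    (hoff : ∀ n ≤ M, blockOffset L n = blockOffset L' n) {n : ℕ} (hn : n < M) :
    L n = L' n := by
  have h0 := hoff n hn.le
  have hlen : (L n).length = (L' n).length := by
    have h1 := hoff (n + 1) hn
    rw [blockOffset_succ, blockOffset_succ] at h1
    omega
  refine List.ext_getElem hlen fun r h1 h2 => ?_
  have e1 := getD_flatMap_range L (L n)[r] hn h1
  have e2 := getD_flatMap_range L' (L n)[r] hn h2
  rw [← h, ← h0, e1, List.getD_eq_getElem _ _ h1, List.getD_eq_getElem _ _ h2] at e2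
  exact e2

end Concatenation

section Walk

variable {m : ℕ}

/-- The increments, in order of time, of the walk `X` at its visits to `b` before time `N`. -/
def walkBlock (X : ℕ → ZMod m) (N : ℕ) (b : ZMod m) : List (ZMod m) :=
  ((List.range N).filter (fun i => decide (X i = b))).map (fun i => X (i + 1) - X i)

lemma length_walkBlock_congr {X Y : ℕ → ZMod m} {i : ℕ} (h : ∀ j < i, X j = Y j) (b : ZMod m) :
    (walkBlock X i b).length = (walkBlock Y i b).length := by
  simp only [walkBlock, List.length_map]
  congr 1
  refine List.filter_congr fun j hj => ?_
  rw [h j (List.mem_range.mp hj)]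

lemma walkBlock_split (X : ℕ → ZMod m) {N i : ℕ} (hi : i < N) :
    ∃ l, walkBlock X N (X i) = walkBlock X i (X i) ++ (X (i + 1) - X i) :: l ∧
      ((∀ j, i < j → j < N → X j ≠ X i) → l = []) := by
  obtain ⟨d, rfl⟩ : ∃ d, N = i + (d + 1) := ⟨N - i - 1, by omega⟩
  refine ⟨(((List.range d).map (fun r => i + (r + 1))).filter
    (fun j => decide (X j = X i))).map (fun j => X (j + 1) - X j), ?_, ?_⟩
  · simp [walkBlock, List.range_add, List.range_succ_eq_map, Function.comp_def]
  · intro h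
    rw [List.map_eq_nil_iff, List.filter_eq_nil_iff]
    intro j hj
    simp only [List.mem_map, List.mem_range] at hj
    obtain ⟨r, hr, rfl⟩ := hj
    simpa using h (i + (r + 1)) (by omega) (by omega)

lemma walkBlock_getD (X : ℕ → ZMod m) {N i : ℕ} (hi : i < N) :
    (walkBlock X N (X i)).getD (walkBlock X i (X i)).length 0 = X (i + 1) - X i := by
  obtain ⟨l, hl, -⟩ := walkBlock_split X hi
  rw [hl, List.getD_append_right _ _ _ _ le_rfl]
  simp

lemma eq_of_walkBlock_eq {X Y : ℕ → ZMod m} {N : ℕ} (h0 : X 0 = Y 0)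
    (h : ∀ b, walkBlock X N b = walkBlock Y N b) : ∀ i ≤ N, X i = Y i := by
  intro i
  induction i using Nat.strong_induction_on with
  | _ i ih =>
    intro hi
    cases i with
    | zero => exact h0
    | succ i =>
      have e : X i = Y i := ih i (by omega) (by omega)
      have hX := walkBlock_getD X (N := N) (i := i) (by omega)
      have hY := walkBlock_getD Y (N := N) (i := i) (by omega)
      rw [h, length_walkBlock_congr (fun j hj => ih j (by omega) (by omega)), e, hY] at hX
      exact (sub_left_inj.mp hX).symm

lemma val_add_natCast_sub (s : ZMod m) {n : ℕ} (hn : n < m) : (s + n - s).val = n := by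
  rw [add_sub_cancel_left, ZMod.val_natCast, Nat.mod_eq_of_lt hn]

/-- The number of elements of `T` among `b, b + 1, …, b + (a - 1)`, with multiplicity. -/
def arcCount (T : ZMod m → Prop) [DecidablePred T] (b : ZMod m) (a : ℕ) : ℤ :=
  ∑ r ∈ Finset.range a, if T (b + r) then 1 else 0

section ArcCount

variable (T : ZMod m → Prop) [DecidablePred T]

lemma arcCount_add (b : ZMod m) (a a' : ℕ) :
    arcCount T b (a + a') = arcCount T b a + arcCount T (b + a) a' := by
  simp only [arcCount, Finset.sum_range_add, add_assoc, Nat.cast_add]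

lemma arcCount_sub_arcCount_succ (b : ZMod m) (a : ℕ) :
    arcCount T b a - arcCount T (b + 1) a =
      (if T b then 1 else 0) - (if T (b + a) then 1 else 0) := by
  have h1 : arcCount T b (a + 1) = arcCount T b a + if T (b + a) then 1 else 0 :=
    Finset.sum_range_succ _ _
  have h2 := arcCount_add T b 1 a
  have h3 : arcCount T b 1 = if T b then 1 else 0 := by
    rw [arcCount, Finset.sum_range_one, Nat.cast_zero, add_zero]
  rw [add_comm 1 a, Nat.cast_one] at h2
  linarith

lemma arcCount_sub_arcCount (s : ZMod m) (a : ℕ) {p q : ℕ} (hpq : p ≤ q) :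
    arcCount T (s + p) a - arcCount T (s + q) a =
      ∑ n ∈ Finset.Ico p q,
        ((if T (s + n) then 1 else 0) - (if T (s + n + a) then 1 else 0)) := by
  induction q, hpq using Nat.le_induction with
  | base => simp
  | succ q hpq ih =>
    rw [Finset.sum_Ico_succ_top hpq, ← ih, ← arcCount_sub_arcCount_succ, Nat.cast_succ,
      ← add_assoc]
    ring

end ArcCount

variable [NeZero m]

lemma add_val_sub (s b : ZMod m) : s + ((b - s).val : ZMod m) = b := by
  rw [ZMod.natCast_zmod_val]; ring

lemma sum_range_add_natCast {A : Type*} [AddCommMonoid A] (s : ZMod m) (F : ZMod m → A) :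
    ∑ n ∈ Finset.range m, F (s + n) = ∑ b, F b :=
  Finset.sum_nbij' (fun n => s + (n : ZMod m)) (fun b => (b - s).val)
    (by simp) (fun b _ => by simpa using ZMod.val_lt (b - s))
    (fun n hn => val_add_natCast_sub s (Finset.mem_range.mp hn))
    (fun b _ => add_val_sub s b) (by simp)

lemma sum_map_walkBlock {A : Type*} [AddCommMonoid A] (X : ℕ → ZMod m) (N : ℕ) (s : ZMod m)
    (F : ZMod m → ZMod m → A) :
    ∑ n ∈ Finset.range m, ((walkBlock X N (s + n)).map (F (s + n))).sum =
      ∑ i ∈ Finset.range N, F (X i) (X (i + 1) - X i) := by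
  rw [sum_range_add_natCast s (fun b => ((walkBlock X N b).map (F b)).sum)]
  induction N with
  | zero => simp [walkBlock]
  | succ N ih =>
    have hb (b : ZMod m) : ((walkBlock X (N + 1) b).map (F b)).sum =
        ((walkBlock X N b).map (F b)).sum +
          if X N = b then F b (X (N + 1) - X N) else 0 := by
      by_cases hX : X N = b <;>
        simp [walkBlock, List.range_succ, hX]
    simp [hb, Finset.sum_add_distrib, ih, Finset.sum_range_succ]

lemma sum_arcCount_walk (T : ZMod m → Prop) [DecidablePred T] (X : ℕ → ZMod m)
    (N : ℕ) :
    ∑ i ∈ Finset.range N, arcCount T (X i) (X (i + 1) - X i).val =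
      arcCount T (X 0) (∑ i ∈ Finset.range N, (X (i + 1) - X i).val) := by
  induction N with
  | zero => simp [arcCount]
  | succ N ih =>
    rw [Finset.sum_range_succ, Finset.sum_range_succ, arcCount_add, ih]
    have hXN : X 0 + ((∑ i ∈ Finset.range N, (X (i + 1) - X i).val : ℕ) : ZMod m) = X N := by
      simp only [Nat.cast_sum, ZMod.natCast_zmod_val, Finset.sum_range_sub, add_sub_cancel]
    rw [hXN]

lemma blockOffset_walkBlock (X : ℕ → ZMod m) (N : ℕ) (s : ZMod m) :
    blockOffset (fun n => walkBlock X N (s + n)) m = N := by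
  simpa [blockOffset] using sum_map_walkBlock X N s (fun _ _ => (1 : ℕ))

lemma sum_flatMap_walkBlock {A : Type*} [AddCommMonoid A] (X : ℕ → ZMod m) (N : ℕ)
    (s : ZMod m) (g : ZMod m → A) :
    (((List.range m).flatMap (fun n => walkBlock X N (s + (n : ℕ)))).map g).sum =
      ∑ i ∈ Finset.range N, g (X (i + 1) - X i) := by
  rw [sum_map_flatMap_range]
  exact sum_map_walkBlock X N s (fun _ => g)

lemma sum_arcCount_blockIndex (T : ZMod m → Prop) [DecidablePred T] (X : ℕ → ZMod m) (N : ℕ)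
    (s : ZMod m) :
    let L := fun n : ℕ => walkBlock X N (s + n)
    let w := (List.range m).flatMap L
    ∑ j ∈ Finset.range N, arcCount T (s + blockIndex L m j) (w.getD j 0).val =
      arcCount T (X 0) (w.map ZMod.val).sum := by
  intro L w
  have h := sum_blockIndex L (0 : ZMod m) (fun n a => arcCount T (s + n) a.val) m
  rw [blockOffset_walkBlock] at h
  rw [h, sum_flatMap_walkBlock, ← sum_arcCount_walk]
  exact sum_map_walkBlock X N s (fun b a => arcCount T b a.val)

/-- If the walks `X` and `Y` have the same concatenation of blocks, then no block boundary of `Y`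
lies strictly after that of `X`. Otherwise let `T` be the set of blocks whose closing boundary is
later for `Y`; comparing the two values of the sum of `arcCount T` shows that each letter between
the two boundaries of a block in `T` leads from that block into `T`, so that `Y` cannot leave `T`
for the last time. -/
lemma blockOffset_walkBlock_le {X Y : ℕ → ZMod m} {N : ℕ} {s : ZMod m}
    (h0 : X 0 = Y 0) (hs : Y N + 1 = s)
    (h : (List.range m).flatMap (fun n => walkBlock X N (s + (n : ℕ))) =
      (List.range m).flatMap (fun n => walkBlock Y N (s + (n : ℕ)))) {n : ℕ} (hn : n ≤ m) :
    blockOffset (fun n => walkBlock Y N (s + (n : ℕ))) n ≤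
      blockOffset (fun n => walkBlock X N (s + (n : ℕ))) n := by
  have hLX (T : ZMod m → Prop) [DecidablePred T] := sum_arcCount_blockIndex T X N s
  have hLY (T : ZMod m → Prop) [DecidablePred T] := sum_arcCount_blockIndex T Y N s
  have hX := blockOffset_walkBlock X N s
  have hY := blockOffset_walkBlock Y N s
  have hYdef (n : ℕ) : (fun n : ℕ => walkBlock Y N (s + n)) n = walkBlock Y N (s + n) := rfl
  dsimp only at hLX hLY
  generalize (fun n : ℕ => walkBlock X N (s + n)) = LX at *
  generalize (fun n : ℕ => walkBlock Y N (s + n)) = LY at *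
  set w := (List.range m).flatMap LY with hw
  rw [h] at hLX
  let T : ZMod m → Prop := fun b =>
    blockOffset LX ((b - s).val + 1) < blockOffset LY ((b - s).val + 1)
  have : DecidablePred T := fun b => Nat.decLt _ _
  have hT {r : ℕ} (hr : r < m) :
      T (s + r) ↔ blockOffset LX (r + 1) < blockOffset LY (r + 1) := by
    simp only [T, val_add_natCast_sub s hr]
  have hforward {j r : ℕ} (hr : r < blockIndex LX m j) (hr' : blockIndex LY m j ≤ r)
      (hj : j < N) : T (s + r) := by
    obtain ⟨p, hp, hp1, hp2⟩ := exists_blockOffset_le LX (hX.symm ▸ hj)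
    obtain ⟨q, hq, hq1, hq2⟩ := exists_blockOffset_le LY (hY.symm ▸ hj)
    rw [blockIndex_eq LX hp hp1 hp2] at hr
    rw [blockIndex_eq LY hq hq1 hq2] at hr'
    rw [hT (by omega)]
    have := blockOffset_mono LX (Nat.succ_le_of_lt hr)
    have := blockOffset_mono LY (Nat.succ_le_succ hr')
    simp only [Nat.succ_eq_add_one] at *
    omega
  have hbackward {j r : ℕ} (hr : r < blockIndex LY m j) (hr' : blockIndex LX m j ≤ r)
      (hj : j < N) : ¬ T (s + r) := by
    obtain ⟨p, hp, hp1, hp2⟩ := exists_blockOffset_le LX (hX.symm ▸ hj)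
    obtain ⟨q, hq, hq1, hq2⟩ := exists_blockOffset_le LY (hY.symm ▸ hj)
    rw [blockIndex_eq LX hp hp1 hp2] at hr'
    rw [blockIndex_eq LY hq hq1 hq2] at hr
    rw [hT (by omega)]
    have := blockOffset_mono LY (Nat.succ_le_of_lt hr)
    have := blockOffset_mono LX (Nat.succ_le_succ hr')
    simp only [Nat.succ_eq_add_one] at *
    omega
  -- Each letter counts at least as much in its block for `Y` as in its block for `X`.
  have hle : ∀ j ∈ Finset.range N,
      arcCount T (s + blockIndex LX m j) (w.getD j 0).val ≤
        arcCount T (s + blockIndex LY m j) (w.getD j 0).val := by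
    intro j hj
    rw [Finset.mem_range] at hj
    rcases le_total (blockIndex LY m j) (blockIndex LX m j) with hc | hc
    · rw [← sub_nonneg, arcCount_sub_arcCount T s _ hc]
      refine Finset.sum_nonneg fun r hr => ?_
      rw [Finset.mem_Ico] at hr
      rw [if_pos (hforward hr.2 hr.1 hj)]
      split_ifs <;> simp
    · rw [← sub_nonpos, arcCount_sub_arcCount T s _ hc]
      refine Finset.sum_nonpos fun r hr => ?_
      rw [Finset.mem_Ico] at hr
      rw [if_neg (hbackward hr.2 hr.1 hj)]
      split_ifs <;> simp
  have heq := (Finset.sum_eq_sum_iff_of_le hle).mp (by rw [hLX, hLY, h0])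
  have hclosed {j r : ℕ} (hj : j < N) (hr : r < blockIndex LX m j)
      (hr' : blockIndex LY m j ≤ r) : T (s + r + w.getD j 0) := by
    have hj' := heq j (Finset.mem_range.mpr hj)
    rw [eq_comm, ← sub_eq_zero, arcCount_sub_arcCount T s _ (hr'.trans hr.le)] at hj'
    rw [Finset.sum_eq_zero_iff_of_nonneg] at hj'
    · have := hj' r (Finset.mem_Ico.mpr ⟨hr', hr⟩)
      rw [if_pos (hforward hr hr' hj), ZMod.natCast_zmod_val] at this
      by_contra hcon
      exact absurd this (by rw [if_neg hcon]; simp)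
    · intro q hq
      rw [Finset.mem_Ico] at hq
      rw [if_pos (hforward hq.2 hq.1 hj)]
      split_ifs <;> simp
  by_contra! hlt
  -- The first violated boundary closes a block that `Y` visits.
  obtain ⟨i₀, hi₀, hTi₀⟩ : ∃ i < N, T (Y i) := by
    have hex : ∃ n, blockOffset LX n < blockOffset LY n := ⟨n, hlt⟩
    obtain ⟨q, hspec, hmin, hnm⟩ : ∃ q, blockOffset LX q < blockOffset LY q ∧
        (∀ r < q, ¬ blockOffset LX r < blockOffset LY r) ∧ q ≤ m :=
      ⟨Nat.find hex, Nat.find_spec hex, fun _ hr => Nat.find_min hex hr,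
        (Nat.find_min' hex hlt).trans hn⟩
    cases q with
    | zero => simp [blockOffset] at hspec
    | succ q =>
      have hq := hmin q (Nat.lt_succ_self q)
      have h1 := blockOffset_succ LX q
      have h2 := blockOffset_succ LY q
      have hne : LY q ≠ [] := by
        intro hnil
        rw [hnil, List.length_nil] at h2
        omega
      rw [hYdef] at hne
      obtain ⟨a, ha⟩ := List.exists_mem_of_ne_nil _ hne
      simp only [walkBlock, List.mem_map, List.mem_filter, List.mem_range,
        decide_eq_true_eq] at ha
      obtain ⟨i, ⟨hi, hYi⟩, -⟩ := ha
      exact ⟨i, hi, by rw [hYi, hT (by omega)]; exact hspec⟩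
  -- After its last visit to `T`, the walk `Y` nevertheless steps into `T`.
  obtain ⟨i, hi, hTi, hlast⟩ : ∃ i < N, T (Y i) ∧ ∀ j, i < j → j < N → ¬ T (Y j) := by
    have hne : ((Finset.range N).filter (fun i => T (Y i))).Nonempty :=
      ⟨i₀, by simp [hi₀, hTi₀]⟩
    obtain ⟨i, hmem, hmax⟩ := Finset.exists_max_image _ id hne
    simp only [Finset.mem_filter, Finset.mem_range, id] at hmem hmax
    exact ⟨i, hmem.1, hmem.2, fun j hij hj hTj => absurd (hmax j ⟨hj, hTj⟩) (by omega)⟩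
  have hYN : ¬ T (Y N) := by
    have hm := NeZero.pos m
    have : Y N = s + ((m - 1 : ℕ) : ZMod m) := by
      rw [← hs, Nat.cast_sub hm]; simp
    rw [this, hT (by omega), Nat.sub_add_cancel hm, hX, hY]
    exact lt_irrefl N
  have hnext : ¬ T (Y (i + 1)) := by
    rcases Nat.lt_or_ge (i + 1) N with hlt' | hge
    · exact hlast _ (Nat.lt_succ_self i) hlt'
    · rwa [show i + 1 = N by omega]
  apply hnext
  obtain ⟨l, hl, hl'⟩ := walkBlock_split Y hi
  rw [hl' fun j hij hj hjj => hlast j hij hj (hjj ▸ hTi)] at hl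
  obtain ⟨q, hq, hqY⟩ : ∃ q < m, s + (q : ZMod m) = Y i :=
    ⟨_, ZMod.val_lt _, add_val_sub s (Y i)⟩
  rw [← hqY, hT hq] at hTi
  have hlY : LY q = walkBlock Y i (Y i) ++ [Y (i + 1) - Y i] := by rw [hYdef, hqY, hl]
  have hlen : (LY q).length = (walkBlock Y i (Y i)).length + 1 := by rw [hlY]; simp
  have hsucc := blockOffset_succ LY q
  have hletter := getD_flatMap_range LY (0 : ZMod m) hq
    (r := (walkBlock Y i (Y i)).length) (by omega)
  rw [← hw, hlY, List.getD_append_right _ _ _ _ le_rfl, Nat.sub_self, List.getD_cons_zero]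
    at hletter
  set j := blockOffset LY q + (walkBlock Y i (Y i)).length with hjdef
  have hjN : j < N := by
    have := blockOffset_mono LY (Nat.succ_le_of_lt hq)
    rw [Nat.succ_eq_add_one] at this
    omega
  have hjX : q < blockIndex LX m j := by
    obtain ⟨p, hp, hp1, hp2⟩ := exists_blockOffset_le LX (hX.symm ▸ hjN)
    rw [blockIndex_eq LX hp hp1 hp2]
    by_contra! hpq
    have := blockOffset_mono LX (Nat.succ_le_succ hpq)
    simp only [Nat.succ_eq_add_one] at this
    omega
  have hfin := hclosed hjN hjX (blockIndex_eq LY hq (by omega) (by omega)).le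
  rwa [hletter, hqY, add_sub_cancel] at hfin

lemma walk_eq_of_flatMap_eq {X Y : ℕ → ZMod m} {N : ℕ} (hX : X 0 = 0) (hY : Y 0 = 0)
    (h : (List.range m).flatMap (fun n => walkBlock X N (X N + 1 + (n : ℕ))) =
      (List.range m).flatMap (fun n => walkBlock Y N (Y N + 1 + (n : ℕ)))) :
    ∀ i ≤ N, X i = Y i := by
  have hend : X N = Y N := by
    have h1 := sum_flatMap_walkBlock X N (X N + 1) id
    have h2 := sum_flatMap_walkBlock Y N (Y N + 1) id
    rw [h, h2] at h1
    simpa only [id, Finset.sum_range_sub, hX, hY, sub_zero] using h1.symm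
  rw [hend] at h
  have h0 : X 0 = Y 0 := hX.trans hY.symm
  refine eq_of_walkBlock_eq h0 fun b => ?_
  have := eq_of_flatMap_range_eq h (fun n hn => le_antisymm
    (blockOffset_walkBlock_le h0.symm (by rw [hend]) h.symm hn)
    (blockOffset_walkBlock_le h0 rfl h hn)) (ZMod.val_lt (b - (Y N + 1)))
  simpa only [add_val_sub] using this

end Walk

lemma fpMap_eq (m k : ℕ) (x : Fin (k + 1) → ZMod m) :
    fpMap m k x = (List.range m).flatMap (fun n =>
      walkBlock (Xseq m k x) (k + 1) (Xseq m k x (k + 1) + 1 + (n : ℕ))) := by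
  have : Xseq m k x (k + 1) = x (Fin.last k) := by simp [Xseq, Fin.last]
  rw [this]
  rfl

lemma length_fpMap (m k : ℕ) [NeZero m] (x : Fin (k + 1) → ZMod m) :
    (fpMap m k x).length = k + 1 := by
  rw [fpMap_eq, length_flatMap_range, blockOffset_walkBlock]

lemma fpMap_injective (m k : ℕ) [NeZero m] : Function.Injective (fpMap m k) := by
  intro x y h
  rw [fpMap_eq, fpMap_eq] at h
  have hxy := walk_eq_of_flatMap_eq (by simp [Xseq]) (by simp [Xseq]) h
  ext i
  have := hxy (i + 1) (by omega)
  simpa [Xseq, Nat.lt_succ_iff.mp i.isLt] using this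

/-- `f ∘ p` is a bijection from words of length `k+1` over `ℤ/mℤ` to themselves. -/
theorem fp_bijective (m k : ℕ) (hm : 1 ≤ m) (w : List (ZMod m)) (hw : w.length = k + 1) :
    ∃! x : Fin (k + 1) → ZMod m, fpMap m k x = w := by
  have : NeZero m := ⟨by omega⟩
  let F : (Fin (k + 1) → ZMod m) → List.Vector (ZMod m) (k + 1) :=
    fun x => ⟨fpMap m k x, length_fpMap m k x⟩
  have hF : Function.Bijective F := by
    refine (Fintype.bijective_iff_injective_and_card F).mpr ⟨fun x y h => ?_, by simp⟩
    exact fpMap_injective m k (congrArg Subtype.val h)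
  obtain ⟨x, hx⟩ := hF.surjective ⟨w, hw⟩
  have hxw : fpMap m k x = w := congrArg Subtype.val hx
  exact ⟨x, hxw, fun y hy => fpMap_injective m k (hy.trans hxw.symm)⟩
end
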